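/- arXiv:1811.12219 — 3 statements merged into one kernel-verified Lean document; each statement's English description precedes it below -/
import Mathlib

section
/- (Witt's Lemma) Let (E,q) be a formed space. Suppose f : U → W is a bijective linear isometry between two subspaces U, W of E such that f(U ∩ K(E)) = W ∩ K(E). Then there exists a bijective isometry g : E → E with g|_U = f. -/
/-!
The proof adds one spanning vector of `U` at a time. Suppose an isometry of `E` already agrees with
`f` on the span `H` of some vectors; after composing with its inverse, `f` is the identity on `H`,
and for the next vector `u`, with image `w` and difference `a = w - u`, an isometry of `E` is needed
that fixes `H` pointwise and maps `u` to `w` (`exists_fix`). Since `f` preserves `ω`, the vector `a`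
is orthogonal to `H`. There are three cases.

* If `a ∈ K(E)`, then `q a a ∈ Λ`, and `x ↦ x + φ x • a` is an isometry for every functional `φ`;
  take `φ` zero on `H` with `φ u = 1` and `φ w ≠ 0`, the last condition making the map injective
  (`isIsom_kernel`).
* If `d = ω(a,u) ≠ 0`, the quasi-reflection `x ↦ x + (d⁻¹ ω(a,x)) • a` works (`isIsom_refl`).
* If `a ∉ K(E)` and `ω(a,u) = 0`, then `a` is singular, and the condition on kernels gives
  `u, w ∉ H + K(E)`. A functional that is zero on `H + K(E)`, is `1` at `u` and nonzero at `w` has the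
  form `ω(c,·)` (`exists_repr`), and for suitable scalars `m`, `t` and `z = m • c + t • a` the map
  `x ↦ x + ω(c,x) • a + ω(a,x) • z` is an isometry (`isIsom_siegel`).

An additive subgroup `Λ` need not be stable under `r ↦ σ(b) r b`, but replacing it by its largest
stable subgroup (`stableCore`) does not change which linear maps are isometries.
-/

/-- A sesquilinear form with respect to the involution `σ`:
biadditive and `q (a • v) (b • w) = σ a * q v w * b`. -/
def IsSesq {F E : Type*} [Field F] [AddCommGroup E] [Module F E]
    (σ : F →+* F) (q : E → E → F) : Prop :=
  (∀ v v' w : E, q (v + v') w = q v w + q v' w) ∧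
  (∀ v w w' : E, q v (w + w') = q v w + q v w') ∧
  ∀ (a b : F) (v w : E), q (a • v) (b • w) = σ a * q v w * b

/-- `ω_q(v,w) = q(v,w) + ε·σ(q(w,v))`. -/
def omegaF {F E : Type*} [Field F] [AddCommGroup E] [Module F E]
    (σ : F →+* F) (ε : F) (q : E → E → F) (v w : E) : F :=
  q v w + ε * σ (q w v)

/-- The kernel `K(E) = {v : ω_q(w,v) = 0 for all w}` of a formed space. -/
def kerSet {F E : Type*} [Field F] [AddCommGroup E] [Module F E]
    (σ : F →+* F) (ε : F) (q : E → E → F) : Set E :=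
  {v : E | ∀ w : E, omegaF σ ε q w v = 0}

/-! ### Sesquilinear algebra -/

section Witt

variable {F E : Type*} [Field F] [AddCommGroup E] [Module F E]

lemma IsSesq.smul_left {σ : F →+* F} {q : E → E → F} (hq : IsSesq σ q) (b : F) (v w : E) :
    q (b • v) w = σ b * q v w := by
  simpa using hq.2.2 b 1 v w

lemma IsSesq.smul_right {σ : F →+* F} {q : E → E → F} (hq : IsSesq σ q) (b : F) (v w : E) :
    q v (b • w) = q v w * b := by
  simpa using hq.2.2 1 b v w

lemma omegaF_add_left {σ : F →+* F} {ε : F} {q : E → E → F} (hq : IsSesq σ q) (v v' w : E) :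
    omegaF σ ε q (v + v') w = omegaF σ ε q v w + omegaF σ ε q v' w := by
  simp only [omegaF, hq.1, hq.2.1, map_add]; ring

lemma omegaF_add_right {σ : F →+* F} {ε : F} {q : E → E → F} (hq : IsSesq σ q) (v w w' : E) :
    omegaF σ ε q v (w + w') = omegaF σ ε q v w + omegaF σ ε q v w' := by
  simp only [omegaF, hq.1, hq.2.1, map_add]; ring

lemma omegaF_smul_left {σ : F →+* F} {ε : F} {q : E → E → F}
    (hq : IsSesq σ q) (b : F) (v w : E) :
    omegaF σ ε q (b • v) w = σ b * omegaF σ ε q v w := by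
  simp only [omegaF, hq.smul_left, hq.smul_right, map_mul]; ring

lemma omegaF_smul_right {σ : F →+* F} (hσ : ∀ a : F, σ (σ a) = a) {ε : F} {q : E → E → F}
    (hq : IsSesq σ q) (b : F) (v w : E) :
    omegaF σ ε q v (b • w) = omegaF σ ε q v w * b := by
  simp only [omegaF, hq.smul_left, hq.smul_right, map_mul, hσ]; ring

lemma omegaF_symm {σ : F →+* F} (hσ : ∀ a : F, σ (σ a) = a) {ε : F} (hε : ε * σ ε = 1)
    (q : E → E → F) (v w : E) :
    omegaF σ ε q v w = ε * σ (omegaF σ ε q w v) := by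
  simp only [omegaF, map_add, map_mul, hσ]
  linear_combination (-q v w) * hε

/-- The form `ω_q` as a map to the dual space, semilinear in its first argument. -/
def omegaLin {σ : F →+* F} (hσ : ∀ a : F, σ (σ a) = a) (ε : F) {q : E → E → F}
    (hq : IsSesq σ q) : E →ₛₗ[σ] Module.Dual F E where
  toFun v :=
    { toFun := fun w => omegaF σ ε q v w
      map_add' := omegaF_add_right hq v
      map_smul' := fun b w => by
        rw [omegaF_smul_right hσ hq, RingHom.id_apply, smul_eq_mul, mul_comm] }
  map_add' v v' := LinearMap.ext fun w => omegaF_add_left hq v v' w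
  map_smul' b v := LinearMap.ext fun w => omegaF_smul_left hq b v w

@[simp] lemma omegaLin_apply {σ : F →+* F} (hσ : ∀ a : F, σ (σ a) = a) (ε : F) {q : E → E → F}
    (hq : IsSesq σ q) (v w : E) : omegaLin hσ ε hq v w = omegaF σ ε q v w := rfl

/-- `kerSet` as a submodule. -/
def kerSub {σ : F →+* F} (hσ : ∀ a : F, σ (σ a) = a) (ε : F) {q : E → E → F}
    (hq : IsSesq σ q) : Submodule F E where
  carrier := kerSet σ ε q
  zero_mem' w := (omegaLin hσ ε hq w).map_zero
  add_mem' {x y} hx hy w := by rw [omegaF_add_right hq, hx w, hy w, add_zero]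
  smul_mem' b x hx w := by rw [omegaF_smul_right hσ hq, hx w, zero_mul]

lemma mem_kerSub {σ : F →+* F} (hσ : ∀ a : F, σ (σ a) = a) (ε : F) {q : E → E → F}
    (hq : IsSesq σ q) {x : E} : x ∈ kerSub hσ ε hq ↔ x ∈ kerSet σ ε q := Iff.rfl

lemma omegaF_ker_left {σ : F →+* F} (hσ : ∀ a : F, σ (σ a) = a) {ε : F} (hε : ε * σ ε = 1)
    {q : E → E → F} {x : E} (hx : x ∈ kerSet σ ε q) (y : E) : omegaF σ ε q x y = 0 := by
  rw [omegaF_symm hσ hε, hx y, map_zero, mul_zero]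

/-- A functional vanishing on `K(E)` has the form `ω_q(c, ·)`. -/
lemma exists_repr [FiniteDimensional F E] {σ : F →+* F} (hσ : ∀ a : F, σ (σ a) = a) {ε : F}
    {q : E → E → F} (hq : IsSesq σ q) (φ : Module.Dual F E)
    (hφ : ∀ x ∈ kerSet σ ε q, φ x = 0) : ∃ c : E, ∀ x, omegaF σ ε q c x = φ x := by
  have : RingHomSurjective σ := ⟨fun a => ⟨σ a, hσ a⟩⟩
  have h : φ ∈ LinearMap.range (omegaLin hσ ε hq) := by
    rw [← Subspace.dualCoannihilator_dualAnnihilator_eq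
      (W := LinearMap.range (omegaLin hσ ε hq)), Submodule.mem_dualAnnihilator]
    intro x hx
    rw [Submodule.mem_dualCoannihilator] at hx
    exact hφ x fun w => hx _ ⟨w, rfl⟩
  obtain ⟨c, rfl⟩ := h
  exact ⟨c, fun x => rfl⟩

/-- No vector space is the union of two proper subspaces, here in the dual of `E / M`. -/
lemma exists_dual_two {M : Submodule F E} {u w : E} (hu : u ∉ M) (hw : w ∉ M) :
    ∃ φ : Module.Dual F E, (∀ x ∈ M, φ x = 0) ∧ φ u = 1 ∧ φ w ≠ 0 := by
  suffices h : ∃ φ : Module.Dual F E, (∀ x ∈ M, φ x = 0) ∧ φ u ≠ 0 ∧ φ w ≠ 0 by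
    obtain ⟨φ, h1, h2, h3⟩ := h
    refine ⟨(φ u)⁻¹ • φ, fun x hx => by simp [h1 x hx], by simp [h2], by simp [h2, h3]⟩
  obtain ⟨φ, hφu, hφ⟩ := Submodule.exists_le_ker_of_notMem hu
  obtain ⟨ψ, hψw, hψ⟩ := Submodule.exists_le_ker_of_notMem hw
  have hφ' : ∀ x ∈ M, φ x = 0 := fun x hx => hφ hx
  have hψ' : ∀ x ∈ M, ψ x = 0 := fun x hx => hψ hx
  by_cases h1 : φ w = 0
  · by_cases h2 : ψ u = 0
    · exact ⟨φ + ψ, fun x hx => by simp [hφ' x hx, hψ' x hx], by simp [h2, hφu],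
        by simp [h1, hψw]⟩
    · exact ⟨ψ, hψ', h2, hψw⟩
  · exact ⟨φ, hφ', hφu, h1⟩

/-- The map `v ↦ q v v` modulo `Λ` has `ω_q` as its polar form. -/
lemma q_add_mem {σ : F →+* F} {ε : F} {Λ : AddSubgroup F} (hmin : ∀ a : F, a - ε * σ a ∈ Λ)
    {q : E → E → F} (hq : IsSesq σ q) (x y : E) :
    q (x + y) (x + y) - (q x x + q y y + omegaF σ ε q x y) ∈ Λ := by
  convert hmin (q y x) using 1
  simp only [omegaF, hq.1, hq.2.1]; ring

/-! ### Isometries of the whole space -/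

/-- A linear endomorphism of `E` that is an isometry (not assumed bijective). -/
def IsIsom (σ : F →+* F) (ε : F) (Λ : AddSubgroup F) (q : E → E → F) (g : E →ₗ[F] E) : Prop :=
  (∀ v v' : E, omegaF σ ε q (g v) (g v') = omegaF σ ε q v v') ∧
    ∀ v : E, q (g v) (g v) - q v v ∈ Λ

/-- The kernel of an isometry lies in `K(E)`, so injectivity need only be checked there. -/
lemma IsIsom.injective {σ : F →+* F} {ε : F} {Λ : AddSubgroup F} {q : E → E → F}
    (hσ : ∀ a : F, σ (σ a) = a) (hq : IsSesq σ q) {g : E →ₗ[F] E} (hg : IsIsom σ ε Λ q g)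
    (hK : ∀ x ∈ kerSet σ ε q, g x = 0 → x = 0) : Function.Injective g := by
  rw [injective_iff_map_eq_zero]
  refine fun x hx => hK x (fun w => ?_) hx
  rw [← hg.1, hx]
  exact (omegaLin hσ ε hq (g w)).map_zero

lemma IsIsom.comp {σ : F →+* F} {ε : F} {Λ : AddSubgroup F} {q : E → E → F}
    {g h : E →ₗ[F] E} (hg : IsIsom σ ε Λ q g) (hh : IsIsom σ ε Λ q h) :
    IsIsom σ ε Λ q (g ∘ₗ h) :=
  ⟨fun v v' => (hg.1 _ _).trans (hh.1 _ _), fun v => by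
    simpa using Λ.add_mem (hg.2 (h v)) (hh.2 v)⟩

lemma IsIsom.symm {σ : F →+* F} {ε : F} {Λ : AddSubgroup F} {q : E → E → F}
    {g : E ≃ₗ[F] E} (hg : IsIsom σ ε Λ q g.toLinearMap) : IsIsom σ ε Λ q g.symm.toLinearMap :=
  ⟨fun v v' => by simpa using (hg.1 (g.symm v) (g.symm v')).symm, fun v => by
    simpa using Λ.neg_mem (hg.2 (g.symm v))⟩

lemma IsIsom.mem_ker {σ : F →+* F} {ε : F} {Λ : AddSubgroup F} {q : E → E → F}
    {g : E ≃ₗ[F] E} (hg : IsIsom σ ε Λ q g.toLinearMap) (x : E) :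
    g x ∈ kerSet σ ε q ↔ x ∈ kerSet σ ε q := by
  constructor
  · intro h w
    rw [← hg.1]; exact h _
  · intro h w
    rw [← g.apply_symm_apply w]
    exact (hg.1 _ _).trans (h _)

lemma isIsom_kernel {σ : F →+* F} {ε : F} {Λ : AddSubgroup F} {q : E → E → F}
    (hσ : ∀ a : F, σ (σ a) = a) (hε : ε * σ ε = 1) (hmin : ∀ a : F, a - ε * σ a ∈ Λ)
    (hΛ : ∀ b, ∀ r ∈ Λ, σ b * r * b ∈ Λ) (hq : IsSesq σ q) {a : E}
    (ha : a ∈ kerSet σ ε q) (haQ : q a a ∈ Λ) (φ : Module.Dual F E) :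
    IsIsom σ ε Λ q (LinearMap.id + φ.smulRight a) := by
  have ha' := omegaF_ker_left hσ hε ha
  constructor
  · intro v v'
    simp [omegaF_add_left hq, omegaF_add_right hq, omegaF_smul_left hq,
      omegaF_smul_right hσ hq, ha', ha _]
  · intro v
    have h := Λ.add_mem (q_add_mem hmin hq v (φ v • a)) (hΛ (φ v) _ haQ)
    rw [omegaF_smul_right hσ hq, ha v, hq.2.2] at h
    convert h using 1
    simp only [LinearMap.add_apply, LinearMap.id_apply, LinearMap.smulRight_apply]
    ring

/-- The quasi-reflection in `a` with parameter `d`, where `q a a ≡ -d` modulo `Λ`. -/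
lemma isIsom_refl {σ : F →+* F} {ε : F} {Λ : AddSubgroup F} {q : E → E → F}
    (hσ : ∀ a : F, σ (σ a) = a) (hε : ε * σ ε = 1) (hmin : ∀ a : F, a - ε * σ a ∈ Λ)
    (hmax : ∀ a ∈ Λ, a + ε * σ a = 0)
    (hΛ : ∀ b, ∀ r ∈ Λ, σ b * r * b ∈ Λ) (hq : IsSesq σ q) {a : E} {d : F} (hd : d ≠ 0)
    (had : q a a + d ∈ Λ) :
    IsIsom σ ε Λ q (LinearMap.id + (d⁻¹ • omegaLin hσ ε hq a).smulRight a) := by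
  have hd' : σ d ≠ 0 := by simpa using hd
  have haa : omegaF σ ε q a a = - d - ε * σ d := by
    have h := hmax _ had
    rw [map_add] at h
    rw [omegaF]; linear_combination h
  constructor
  · intro v v'
    simp only [LinearMap.add_apply, LinearMap.id_apply, LinearMap.smulRight_apply,
      LinearMap.smul_apply, omegaLin_apply, smul_eq_mul, omegaF_add_left hq, omegaF_add_right hq,
      omegaF_smul_left hq, omegaF_smul_right hσ hq, haa, omegaF_symm hσ hε q v a, map_mul,
      map_inv₀]
    field_simp
    ring
  · intro v
    simp only [LinearMap.add_apply, LinearMap.id_apply, LinearMap.smulRight_apply,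
      LinearMap.smul_apply, omegaLin_apply, smul_eq_mul]
    set x := omegaF σ ε q a v with hx
    have h1 := q_add_mem hmin hq v ((d⁻¹ * x) • a)
    have h2 := hΛ (d⁻¹ * x) _ had
    have h3 := hmin (σ x * x * (σ d)⁻¹)
    rw [omegaF_smul_right hσ hq, omegaF_symm hσ hε q v a, ← hx, hq.2.2] at h1
    convert Λ.sub_mem (Λ.add_mem h1 h2) h3 using 1
    simp only [map_mul, map_inv₀, hσ]
    field_simp
    ring

/-- A transformation of Siegel type attached to a singular vector `a` and vectors `c`, `z`, where
`z` acts under `ω_q` as `m • c + t • a`. -/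
lemma isIsom_siegel {σ : F →+* F} {ε : F} {Λ : AddSubgroup F} {q : E → E → F}
    (hσ : ∀ a : F, σ (σ a) = a) (hε : ε * σ ε = 1) (hmin : ∀ a : F, a - ε * σ a ∈ Λ)
    (hmax : ∀ a ∈ Λ, a + ε * σ a = 0)
    (hΛ : ∀ b, ∀ r ∈ Λ, σ b * r * b ∈ Λ) (hq : IsSesq σ q) {a c z : E} {m t : F}
    (haQ : q a a ∈ Λ)
    (hz : ∀ y, omegaF σ ε q z y = σ m * omegaF σ ε q c y + σ t * omegaF σ ε q a y)
    (hzQ : q z z + ε * t ∈ Λ) (hm : 1 + omegaF σ ε q a z + ε * m = 0) :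
    IsIsom σ ε Λ q
      (LinearMap.id + (omegaLin hσ ε hq c).smulRight a + (omegaLin hσ ε hq a).smulRight z) := by
  have haa : omegaF σ ε q a a = 0 := hmax _ haQ
  have hzz : omegaF σ ε q z z = - (ε * t) - σ t := by
    have h := hmax _ hzQ
    rw [map_add, map_mul] at h
    rw [omegaF]; linear_combination h - σ t * hε
  have hza : ε + σ m + omegaF σ ε q z a = 0 := by
    have h := congrArg (fun r => ε * σ r) hm
    simp only [map_add, map_mul, map_one, map_zero] at h
    rw [omegaF_symm hσ hε q z a]; linear_combination h - σ m * hε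
  have hxz : ∀ x, omegaF σ ε q x z =
      ε * (σ (omegaF σ ε q c x) * m + σ (omegaF σ ε q a x) * t) := by
    intro x
    rw [omegaF_symm hσ hε q x z, hz, map_add, map_mul, map_mul, hσ, hσ]; ring
  constructor
  · intro v v'
    simp only [LinearMap.add_apply, LinearMap.id_apply, LinearMap.smulRight_apply,
      omegaLin_apply, omegaF_add_left hq, omegaF_add_right hq,
      omegaF_smul_left hq, omegaF_smul_right hσ hq, haa, hzz]
    rw [hz v', hxz v, omegaF_symm hσ hε q v a]
    linear_combination (σ (omegaF σ ε q c v) * omegaF σ ε q a v') * hm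
      + (σ (omegaF σ ε q a v) * omegaF σ ε q c v') * hza
  · intro v
    simp only [LinearMap.add_apply, LinearMap.id_apply, LinearMap.smulRight_apply,
      omegaLin_apply]
    have h1 := q_add_mem hmin hq (v + omegaF σ ε q c v • a) (omegaF σ ε q a v • z)
    have h2 := q_add_mem hmin hq v (omegaF σ ε q c v • a)
    have h3 := hΛ (omegaF σ ε q c v) _ haQ
    have h4 := hΛ (omegaF σ ε q a v) _ hzQ
    have h5 := hmin (σ (omegaF σ ε q c v) * omegaF σ ε q a v)
    simp only [omegaF_add_left hq, omegaF_smul_left hq, omegaF_smul_right hσ hq, hq.2.2] at h1 h2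
    rw [hxz v] at h1
    rw [omegaF_symm hσ hε q v a] at h2
    rw [map_mul, hσ] at h5
    convert Λ.sub_mem (Λ.add_mem (Λ.add_mem h1 h2) (Λ.add_mem h3 h4)) h5 using 1
    linear_combination (σ (omegaF σ ε q c v) * omegaF σ ε q a v) * hm

/-! ### Extending by one vector -/

/-- The inductive step. The last three hypotheses say that the identity of `H` together with
`u ↦ w` is an isometry on `H + ⟨u⟩` that preserves membership in `K(E)`. Membership is only required
to be preserved for the vectors `u - h`, since it is trivially preserved on `H`. -/
lemma exists_fix [FiniteDimensional F E] {σ : F →+* F} {ε : F} {Λ : AddSubgroup F}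
    {q : E → E → F}
    (hσ : ∀ a : F, σ (σ a) = a) (hε : ε * σ ε = 1) (hmin : ∀ a : F, a - ε * σ a ∈ Λ)
    (hmax : ∀ a ∈ Λ, a + ε * σ a = 0)
    (hΛ : ∀ b, ∀ r ∈ Λ, σ b * r * b ∈ Λ) (hq : IsSesq σ q) {H : Submodule F E} {u w : E}
    (hu : u ∉ H) (hw : w ∉ H)
    (hω : ∀ h ∈ H, omegaF σ ε q w h = omegaF σ ε q u h)
    (hQ : q w w - q u u ∈ Λ)
    (hK : ∀ h ∈ H, u - h ∈ kerSet σ ε q ↔ w - h ∈ kerSet σ ε q) :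
    ∃ g : E ≃ₗ[F] E, IsIsom σ ε Λ q g.toLinearMap ∧ (∀ h ∈ H, g h = h) ∧ g u = w := by
  obtain ⟨a, rfl⟩ : ∃ a, w = u + a := ⟨w - u, by abel⟩
  suffices h : ∃ g : E →ₗ[F] E, IsIsom σ ε Λ q g ∧ (∀ x ∈ kerSet σ ε q, g x = 0 → x = 0) ∧
      (∀ h ∈ H, g h = h) ∧ g u = u + a by
    obtain ⟨g, h1, h2, h3, h4⟩ := h
    have hinj := h1.injective hσ hq h2
    exact ⟨LinearEquiv.ofInjectiveEndo g hinj, h1, h3, h4⟩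
  have hωa : ∀ h ∈ H, omegaF σ ε q a h = 0 := by
    intro h hh
    have := hω h hh
    rw [omegaF_add_left hq] at this
    simpa using this
  -- `q a a ≡ -ω(u,a) ≡ -ω(a,u)` modulo `Λ`
  have had : q a a + omegaF σ ε q a u ∈ Λ := by
    have h1 := q_add_mem hmin hq a u
    rw [add_comm a u] at h1
    convert Λ.sub_mem hQ h1 using 1
    ring
  by_cases ha : a ∈ kerSet σ ε q
  · obtain ⟨φ, hφ, hφu, hφw⟩ := exists_dual_two hu hw
    have haQ : q a a ∈ Λ := by simpa [omegaF_ker_left hσ hε ha] using had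
    refine ⟨_, isIsom_kernel hσ hε hmin hΛ hq ha haQ φ, ?_, ?_, ?_⟩
    · intro x _ hx
      simp only [LinearMap.add_apply, LinearMap.id_apply, LinearMap.smulRight_apply] at hx
      have h := congrArg φ hx
      simp only [map_add, map_smul, map_zero, smul_eq_mul] at h
      rw [map_add, hφu] at hφw
      have h0 : φ x = 0 := by
        have : φ x * (1 + φ a) = 0 := by linear_combination h
        exact (mul_eq_zero.mp this).resolve_right hφw
      simpa [h0] using hx
    · intro h hh
      simp [hφ h hh]
    · simp [hφu]
  by_cases hd : omegaF σ ε q a u = 0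
  · have haQ : q a a ∈ Λ := by simpa [hd] using had
    have haa : omegaF σ ε q a a = 0 := hmax _ haQ
    have key : ∀ y, (y ∈ H ⊔ kerSub hσ ε hq) → ∃ h ∈ H, y - h ∈ kerSet σ ε q := by
      intro y hy
      obtain ⟨h, hh, k, hk, rfl⟩ := Submodule.mem_sup.mp hy
      exact ⟨h, hh, by simpa [mem_kerSub] using hk⟩
    have haK : ∀ h, u - h ∈ kerSet σ ε q → u + a - h ∈ kerSet σ ε q → False := by
      intro h h1 h2
      have := (kerSub hσ ε hq).sub_mem h2 h1
      rw [show u + a - h - (u - h) = a by abel] at this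
      exact ha this
    have hu' : u ∉ H ⊔ kerSub hσ ε hq := fun h => by
      obtain ⟨h, hh, hk⟩ := key _ h
      exact haK h hk ((hK h hh).1 hk)
    have hw' : u + a ∉ H ⊔ kerSub hσ ε hq := fun h => by
      obtain ⟨h, hh, hk⟩ := key _ h
      exact haK h ((hK h hh).2 hk) hk
    obtain ⟨φ, hφ, hφu, hφw⟩ := exists_dual_two hu' hw'
    obtain ⟨c, hc⟩ := exists_repr hσ hq φ fun x hx =>
      hφ x ((le_sup_right : _ ≤ H ⊔ kerSub hσ ε hq) hx)
    rw [map_add, hφu] at hφw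
    set μ := 1 + φ a with hμ
    have hca : omegaF σ ε q c a = μ - 1 := by rw [hc, hμ]; ring
    have hε0 : ε ≠ 0 := left_ne_zero_of_mul_eq_one hε
    have hμ' : σ μ ≠ 0 := by simpa using hφw
    have hσε : σ ε = ε⁻¹ := eq_inv_of_mul_eq_one_right hε
    -- `m` makes `ω` invariant, and `t` then corrects `q z z`
    set m : F := -(ε * σ μ)⁻¹ with hm
    set t : F := -(μ * (σ m * q c c * m)) / ε with ht
    have hσm : σ m = -(ε / μ) := by
      rw [hm, map_neg, map_inv₀, map_mul, hσ, hσε]; field_simp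
    refine ⟨_, isIsom_siegel hσ hε hmin hmax hΛ hq (a := a) (c := c) (z := m • c + t • a)
      (m := m) (t := t) haQ ?_ ?_ ?_, ?_, ?_, ?_⟩
    · intro y
      rw [omegaF_add_left hq, omegaF_smul_left hq, omegaF_smul_left hq]
    · have h1 := q_add_mem hmin hq (m • c) (t • a)
      have h2 := hΛ t _ haQ
      rw [omegaF_smul_left hq, omegaF_smul_right hσ hq, hca, hq.2.2, hq.2.2] at h1
      convert Λ.add_mem h1 h2 using 1
      have h3 : ε * t + μ * (σ m * q c c * m) = 0 := by rw [ht]; field_simp; ring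
      have h4 : σ m * μ = -ε := by rw [hσm]; field_simp
      have h5 : σ m * q c c * m + σ m * (μ - 1) * t + ε * t = 0 - ε * t * 0 := by
        have h6 : μ * (σ m * q c c * m + σ m * (μ - 1) * t + ε * t) = 0 := by
          linear_combination h3 + (μ - 1) * t * h4
        rw [(mul_eq_zero.mp h6).resolve_left hφw]; ring
      linear_combination h5
    · rw [omegaF_add_right hq, omegaF_smul_right hσ hq, omegaF_smul_right hσ hq, haa,
        omegaF_symm hσ hε q a c, hca, hm, map_sub, map_one]
      field_simp
      ring
    · intro x hx h0
      simpa [hx c, hx a] using h0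
    · intro h hh
      simp [hωa h hh, hc, hφ h ((le_sup_left : H ≤ H ⊔ kerSub hσ ε hq) hh)]
    · simp [hd, hc, hφu]
  · refine ⟨_, isIsom_refl hσ hε hmin hmax hΛ hq hd had, ?_, ?_, ?_⟩
    · intro x hx h0
      simpa [hx a] using h0
    · intro h hh
      simp [hωa h hh]
    · simp [hd]

/-! ### Induction on a spanning set -/

/-- The theorem for a `Λ` stable under `r ↦ σ(b) r b`, with `U` the span of a finite set and `f` a
linear map defined on all of `E` of which only the restriction to `U` matters. -/
lemma exists_extend_span [FiniteDimensional F E] {σ : F →+* F} {ε : F} {Λ : AddSubgroup F}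
    {q : E → E → F}
    (hσ : ∀ a : F, σ (σ a) = a) (hε : ε * σ ε = 1) (hmin : ∀ a : F, a - ε * σ a ∈ Λ)
    (hmax : ∀ a ∈ Λ, a + ε * σ a = 0)
    (hΛ : ∀ b, ∀ r ∈ Λ, σ b * r * b ∈ Λ) (hq : IsSesq σ q) {s : Set E} (hs : s.Finite)
    (f : E →ₗ[F] E)
    (hinj : ∀ x ∈ Submodule.span F s, f x = 0 → x = 0)
    (hfω : ∀ x ∈ Submodule.span F s, ∀ y ∈ Submodule.span F s,
      omegaF σ ε q (f x) (f y) = omegaF σ ε q x y)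
    (hfQ : ∀ x ∈ Submodule.span F s, q (f x) (f x) - q x x ∈ Λ)
    (hfK : ∀ x ∈ Submodule.span F s, x ∈ kerSet σ ε q ↔ f x ∈ kerSet σ ε q) :
    ∃ g : E ≃ₗ[F] E, IsIsom σ ε Λ q g.toLinearMap ∧ ∀ x ∈ Submodule.span F s, g x = f x := by
  induction s, hs using Set.Finite.induction_on with
  | empty =>
    refine ⟨LinearEquiv.refl F E, ⟨fun _ _ => rfl, fun v => by simp⟩, fun x hx => ?_⟩
    rw [Submodule.span_empty, Submodule.mem_bot] at hx
    simp [hx]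
  | @insert u s _ _ ih =>
    set H := Submodule.span F s with hH
    have hle : H ≤ Submodule.span F (insert u s) := Submodule.span_mono (Set.subset_insert _ _)
    have huU : u ∈ Submodule.span F (insert u s) :=
      Submodule.subset_span (Set.mem_insert _ _)
    obtain ⟨g, hg, hgf⟩ := ih (fun x hx => hinj x (hle hx))
      (fun x hx y hy => hfω x (hle hx) y (hle hy)) (fun x hx => hfQ x (hle hx))
      (fun x hx => hfK x (hle hx))
    suffices h : ∃ g' : E ≃ₗ[F] E, IsIsom σ ε Λ q g'.toLinearMap ∧ (∀ h ∈ H, g' h = h) ∧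
        g' u = g.symm (f u) by
      obtain ⟨g', h1, h2, h3⟩ := h
      refine ⟨g'.trans g, hg.comp h1, fun x hx => ?_⟩
      obtain ⟨b, y, hy, rfl⟩ := Submodule.mem_span_insert.mp hx
      simp [h2 y hy, h3, hgf y hy]
    have hfix : ∀ h ∈ H, g.symm (f h) = h := fun h hh => by simp [← hgf h hh]
    have hgs := hg.symm
    by_cases huw : g.symm (f u) = u
    · exact ⟨LinearEquiv.refl F E, ⟨fun _ _ => rfl, fun v => by simp⟩, fun _ _ => rfl, huw.symm⟩
    refine exists_fix hσ hε hmin hmax hΛ hq (fun h => huw (hfix u h)) (fun h => huw ?_) ?_ ?_ ?_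
    · have h1 : f (g.symm (f u) - u) = 0 := by
        rw [map_sub, ← hgf _ h]; simp
      exact sub_eq_zero.mp (hinj _ (Submodule.sub_mem _ (hle h) huU) h1)
    · intro h hh
      conv_lhs => rw [← hfix h hh]
      exact (hgs.1 _ _).trans (hfω u huU h (hle hh))
    · simpa using Λ.add_mem (hgs.2 (f u)) (hfQ u huU)
    · intro h hh
      rw [hfK _ (Submodule.sub_mem _ huU (hle hh)), ← hgs.mem_ker, map_sub, map_sub, hfix h hh]

/-- The largest subgroup of `Λ` stable under `r ↦ σ(b) r b` for all `b`. -/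
def stableCore (σ : F →+* F) (Λ : AddSubgroup F) : AddSubgroup F where
  carrier := {r | ∀ b, σ b * r * b ∈ Λ}
  zero_mem' b := by simp
  add_mem' {x y} hx hy b := by
    rw [mul_add, add_mul]; exact Λ.add_mem (hx b) (hy b)
  neg_mem' {x} hx b := by
    rw [mul_neg, neg_mul]; exact Λ.neg_mem (hx b)

end Witt

/-- Witt's Lemma: let `(E,q)` be a formed space and `f : U → W` a bijective isometry
between subspaces of `E` with `f(U ∩ K(E)) = W ∩ K(E)`. Then `f` extends to a bijective
isometry `g : E → E`. -/
theorem stmt10 {F E : Type*} [Field F] [AddCommGroup E] [Module F E]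
    [FiniteDimensional F E]
    (σ : F →+* F) (hσ : ∀ a : F, σ (σ a) = a)
    (ε : F) (hε : ε * σ ε = 1)
    (Λ : AddSubgroup F)
    (hmin : ∀ a : F, a - ε * σ a ∈ Λ)
    (hmax : ∀ a ∈ Λ, a + ε * σ a = 0)
    (q : E → E → F) (hq : IsSesq σ q)
    (U W : Submodule F E) (f : U →ₗ[F] W) (hfbij : Function.Bijective f)
    (hfω : ∀ u u' : U, omegaF σ ε q (f u : E) (f u' : E) = omegaF σ ε q (u : E) (u' : E))
    (hfQ : ∀ u : U, q (f u : E) (f u : E) - q (u : E) (u : E) ∈ Λ)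
    (hker : (fun u : U => ((f u : W) : E)) '' {u : U | (u : E) ∈ kerSet σ ε q} =
      {w : E | w ∈ W ∧ w ∈ kerSet σ ε q}) :
    ∃ g : E ≃ₗ[F] E,
      (∀ v v' : E, omegaF σ ε q (g v) (g v') = omegaF σ ε q v v') ∧
      (∀ v : E, q (g v) (g v) - q v v ∈ Λ) ∧
      ∀ u : U, g (u : E) = (f u : E) := by
  have hle : ∀ r ∈ stableCore σ Λ, r ∈ Λ := fun r hr => by simpa using hr 1
  obtain ⟨f', hf'⟩ := LinearMap.exists_extend (W.subtype ∘ₗ f)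
  have hf : ∀ u : U, f' (u : E) = (f u : E) := fun u => LinearMap.congr_fun hf' u
  obtain ⟨s, hs⟩ := (IsNoetherian.noetherian U : U.FG)
  have key := exists_extend_span (Λ := stableCore σ Λ) (s := (s : Set E)) hσ hε
    (fun a b => by
      convert hmin (σ b * a * b) using 1
      simp only [map_mul, hσ]; ring)
    (fun a ha => hmax a (hle a ha))
    (fun b r hr b' => by
      convert hr (b * b') using 1
      rw [map_mul]; ring)
    hq s.finite_toSet f'
  rw [hs] at key
  have hext := key ?_ ?_ ?_ ?_
  · obtain ⟨g, hg, hgf⟩ := hext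
    refine ⟨g, hg.1, fun v => hle _ (hg.2 v), fun u => ?_⟩
    rw [← hf u]
    exact hgf u u.2
  · intro x hx h0
    rw [hf ⟨x, hx⟩] at h0
    have : f ⟨x, hx⟩ = f 0 := by rw [map_zero]; exact Subtype.ext h0
    exact congrArg Subtype.val (hfbij.1 this)
  · intro x hx y hy
    rw [hf ⟨x, hx⟩, hf ⟨y, hy⟩]
    exact hfω _ _
  · -- scaling `x` by `b` puts the difference in the stable core
    intro x hx b
    have h := hfQ (b • ⟨x, hx⟩)
    rw [map_smul, Submodule.coe_smul, Submodule.coe_smul, hq.2.2, hq.2.2, ← hf ⟨x, hx⟩] at h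
    rw [mul_sub, sub_mul]
    exact h
  · intro x hx
    rw [hf ⟨x, hx⟩]
    constructor
    · intro h
      have h1 : (f ⟨x, hx⟩ : E) ∈ {w : E | w ∈ W ∧ w ∈ kerSet σ ε q} :=
        hker ▸ ⟨⟨x, hx⟩, h, rfl⟩
      exact h1.2
    · intro h
      have h1 : (f ⟨x, hx⟩ : E) ∈ {w : E | w ∈ W ∧ w ∈ kerSet σ ε q} := ⟨(f ⟨x, hx⟩).2, h⟩
      rw [← hker] at h1
      obtain ⟨u, hu, hux⟩ := h1
      have h2 : u = ⟨x, hx⟩ := hfbij.1 (Subtype.ext hux)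
      rw [h2] at hu
      exact hu
end

section
/- Let V be a finite-dimensional vector space over a field and let A, B ≤ V be two subspaces of the same dimension. Then there exists a subspace L ≤ V which is simultaneously a complement to A and to B, i.e. A ⊕ L = V and B ⊕ L = V. -/
/-!
The proof is by induction on the codimension of `A` and `B`. If both are proper subspaces, there is
a vector `v` outside `A ∪ B`, since a vector space is never the union of two proper subspaces
(over any field). A common complement `L` of `A ⊕ ⟨v⟩` and `B ⊕ ⟨v⟩` then yields the common
complement `⟨v⟩ ⊔ L` of `A` and `B`, by modularity of the lattice of subspaces.
-/

theorem exists_notMem_of_ne_top {F V : Type*} [Field F] [AddCommGroup V] [Module F V]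
    {A B : Submodule F V} (hA : A ≠ ⊤) (hB : B ≠ ⊤) : ∃ v, v ∉ A ∧ v ∉ B := by
  obtain ⟨a, ha⟩ : ∃ a, a ∉ A := by
    by_contra! hc
    exact hA (Submodule.eq_top_iff'.2 hc)
  obtain ⟨b, hb⟩ : ∃ b, b ∉ B := by
    by_contra! hc
    exact hB (Submodule.eq_top_iff'.2 hc)
  by_contra! hc
  have haB : a ∈ B := hc a ha
  have hbA : b ∈ A := by
    by_contra h
    exact hb (hc b h)
  exact hb ((B.add_mem_iff_right haB).1 (hc (a + b) fun h => ha ((A.add_mem_iff_left hbA).1 h)))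

theorem disjoint_span_singleton_of_notMem {F V : Type*} [Field F] [AddCommGroup V] [Module F V]
    {A : Submodule F V} {v : V} (hv : v ∉ A) : Disjoint A (Submodule.span F {v}) :=
  Submodule.disjoint_span_singleton.2 fun h => absurd h hv

theorem finrank_sup_span_singleton_of_notMem {F V : Type*} [Field F] [AddCommGroup V] [Module F V]
    [FiniteDimensional F V] {A : Submodule F V} {v : V} (hv : v ∉ A) :
    Module.finrank F ↥(A ⊔ Submodule.span F {v}) = Module.finrank F A + 1 := by
  have h := Submodule.finrank_sup_add_finrank_inf_eq A (Submodule.span F {v})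
  have hv0 : v ≠ 0 := fun h0 => hv (h0 ▸ A.zero_mem)
  rwa [(disjoint_span_singleton_of_notMem hv).eq_bot, finrank_bot, add_zero,
    finrank_span_singleton hv0] at h

theorem exists_common_isCompl_of_codim {F V : Type*} [Field F] [AddCommGroup V] [Module F V]
    [FiniteDimensional F V] (n : ℕ) (A B : Submodule F V)
    (hA : Module.finrank F A + n = Module.finrank F V)
    (hB : Module.finrank F B + n = Module.finrank F V) :
    ∃ L : Submodule F V, IsCompl A L ∧ IsCompl B L := by
  induction n generalizing A B with
  | zero =>
    rw [Submodule.eq_top_of_finrank_eq hA, Submodule.eq_top_of_finrank_eq hB]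
    exact ⟨⊥, isCompl_top_bot, isCompl_top_bot⟩
  | succ n ih =>
    have ne_top : ∀ C : Submodule F V,
        Module.finrank F C + (n + 1) = Module.finrank F V → C ≠ ⊤ := by
      rintro C hC rfl
      rw [finrank_top] at hC
      omega
    obtain ⟨v, hvA, hvB⟩ := exists_notMem_of_ne_top (ne_top A hA) (ne_top B hB)
    obtain ⟨L, hLA, hLB⟩ := ih (A ⊔ Submodule.span F {v}) (B ⊔ Submodule.span F {v})
      (by rw [finrank_sup_span_singleton_of_notMem hvA]; omega)
      (by rw [finrank_sup_span_singleton_of_notMem hvB]; omega)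
    exact ⟨Submodule.span F {v} ⊔ L,
      (disjoint_span_singleton_of_notMem hvA).isCompl_sup_right_of_isCompl_sup_left hLA,
      (disjoint_span_singleton_of_notMem hvB).isCompl_sup_right_of_isCompl_sup_left hLB⟩


/-- Let `V` be a finite-dimensional vector space and `A`, `B` two subspaces of the same
dimension. Then there is a subspace `L` which is simultaneously complementary to `A` and
to `B`. -/
theorem stmt12 {F V : Type*} [Field F] [AddCommGroup V] [Module F V]
    [FiniteDimensional F V]
    (A B : Submodule F V) (h : Module.finrank F A = Module.finrank F B) :
    ∃ L : Submodule F V, IsCompl A L ∧ IsCompl B L := by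
  have hA := A.finrank_le
  exact exists_common_isCompl_of_codim (Module.finrank F V - Module.finrank F A) A B
    (by omega) (by omega)
end

section
/- Let (E,q) be a formed space, U, W₁, W₂ isotropic subspaces of E each containing R(E), with dim W₁ = dim W₂ and W₁ + U^⊥ = W₂ + U^⊥ = E. An isomorphism f : W₁ → W₂ restricting to the identity on R(E) extends to a bijective isometry of E fixing U pointwise if and only if f(w) − w ∈ U^⊥ for all w ∈ W₁. -/
/-- The orthogonal complement of a set `S ⊆ E`: `{v : ω_q(v,u) = 0 for all u ∈ S}`. -/
def perpSet {F E : Type*} [Field F] [AddCommGroup E] [Module F E]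
    (σ : F →+* F) (ε : F) (q : E → E → F) (S : Set E) : Set E :=
  {v : E | ∀ u ∈ S, omegaF σ ε q v u = 0}

/-- The radical `R(E) = {v ∈ K(E) : q(v,v) ∈ Λ}` of a formed space (as a set). -/
def radSet {F E : Type*} [Field F] [AddCommGroup E] [Module F E]
    (σ : F →+* F) (ε : F) (q : E → E → F) (Λ : Set F) : Set E :=
  {v : E | (∀ w : E, omegaF σ ε q w v = 0) ∧ q v v ∈ Λ}

/-- A subspace `U` is isotropic if `ω_q` vanishes on `U` and `q(u,u) ∈ Λ` for `u ∈ U`. -/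
def IsIsotropic {F E : Type*} [Field F] [AddCommGroup E] [Module F E]
    (σ : F →+* F) (ε : F) (q : E → E → F) (Λ : Set F) (U : Submodule F E) : Prop :=
  (∀ u ∈ U, ∀ u' ∈ U, omegaF σ ε q u u' = 0) ∧ ∀ u ∈ U, q u u ∈ Λ

/-! ### Formed spaces and their isometries -/

/-- The standing assumptions on a formed space, together with closure of `Λ` under
`a ↦ σ(c) a c`. That closure makes `q(v,v) mod Λ` compatible with scaling `v`. -/
structure IsFormed {F E : Type*} [Field F] [AddCommGroup E] [Module F E]
    (σ : F →+* F) (ε : F) (Λ : AddSubgroup F) (q : E → E → F) : Prop where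
  invol : ∀ a : F, σ (σ a) = a
  unit : ε * σ ε = 1
  lmin : ∀ a : F, a - ε * σ a ∈ Λ
  lmax : ∀ a ∈ Λ, a + ε * σ a = 0
  scale : ∀ a ∈ Λ, ∀ c : F, σ c * a * c ∈ Λ
  sesq : IsSesq σ q

/-- Bijective isometries of `(E, q)` that fix the kernel `K(E)` pointwise. -/
structure IsIsoK {F E : Type*} [Field F] [AddCommGroup E] [Module F E]
    (σ : F →+* F) (ε : F) (Λ : AddSubgroup F) (q : E → E → F) (g : E ≃ₗ[F] E) : Prop where
  om : ∀ v v' : E, omegaF σ ε q (g v) (g v') = omegaF σ ε q v v'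
  form : ∀ v : E, q (g v) (g v) - q v v ∈ Λ
  ker : ∀ k : E, (∀ w, omegaF σ ε q w k = 0) → g k = k

/-- The largest additive subgroup of `Λ` closed under `a ↦ σ(c) a c`. -/
def scaleCore {F : Type*} [Field F] (σ : F →+* F) (Λ : AddSubgroup F) : AddSubgroup F where
  carrier := {a | ∀ c : F, σ c * a * c ∈ Λ}
  zero_mem' := fun c => by simp
  add_mem' := fun {a b} ha hb c => by
    have := Λ.add_mem (ha c) (hb c)
    rwa [← add_mul, ← mul_add] at this
  neg_mem' := fun {a} ha c => by
    have := Λ.neg_mem (ha c)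
    rwa [← neg_mul, ← mul_neg] at this

section Formed

variable {F E : Type*} [Field F] [AddCommGroup E] [Module F E]
  {σ : F →+* F} {ε : F} {Λ : AddSubgroup F} {q : E → E → F}

namespace IsFormed

theorem q_smul_left (H : IsFormed σ ε Λ q) (a : F) (v w : E) : q (a • v) w = σ a * q v w := by
  have := H.sesq.2.2 a 1 v w
  simpa using this

theorem q_smul_right (H : IsFormed σ ε Λ q) (a : F) (v w : E) : q v (a • w) = q v w * a := by
  have := H.sesq.2.2 1 a v w
  simpa using this

theorem add_left (H : IsFormed σ ε Λ q) (v v' w : E) :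
    omegaF σ ε q (v + v') w = omegaF σ ε q v w + omegaF σ ε q v' w := by
  simp only [omegaF, H.sesq.1, H.sesq.2.1, map_add]; ring

theorem add_right (H : IsFormed σ ε Λ q) (v w w' : E) :
    omegaF σ ε q v (w + w') = omegaF σ ε q v w + omegaF σ ε q v w' := by
  simp only [omegaF, H.sesq.1, H.sesq.2.1, map_add]; ring

theorem smul_left (H : IsFormed σ ε Λ q) (a : F) (v w : E) :
    omegaF σ ε q (a • v) w = σ a * omegaF σ ε q v w := by
  simp only [omegaF, H.q_smul_left, H.q_smul_right, map_mul]; ring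

theorem smul_right (H : IsFormed σ ε Λ q) (a : F) (v w : E) :
    omegaF σ ε q v (a • w) = omegaF σ ε q v w * a := by
  simp only [omegaF, H.q_smul_left, H.q_smul_right, map_mul, H.invol]; ring

theorem sub_left (H : IsFormed σ ε Λ q) (v v' w : E) :
    omegaF σ ε q (v - v') w = omegaF σ ε q v w - omegaF σ ε q v' w := by
  rw [eq_sub_iff_add_eq, ← H.add_left, sub_add_cancel]

theorem sub_right (H : IsFormed σ ε Λ q) (v w w' : E) :
    omegaF σ ε q v (w - w') = omegaF σ ε q v w - omegaF σ ε q v w' := by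
  rw [eq_sub_iff_add_eq, ← H.add_right, sub_add_cancel]

theorem symm (H : IsFormed σ ε Λ q) (v w : E) :
    omegaF σ ε q v w = ε * σ (omegaF σ ε q w v) := by
  simp only [omegaF, map_add, map_mul, H.invol]
  linear_combination (-(q v w)) * H.unit

theorem symm_zero (H : IsFormed σ ε Λ q) {v w : E} (h : omegaF σ ε q v w = 0) :
    omegaF σ ε q w v = 0 := by
  rw [H.symm, h]; simp

/-- Modulo `Λ`, the form `ω_q` is the polarization of `v ↦ q(v,v)`. -/
theorem q_add (H : IsFormed σ ε Λ q) (v w : E) :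
    q (v + w) (v + w) - q v v - q w w - omegaF σ ε q v w ∈ Λ := by
  have := H.lmin (q w v)
  convert this using 1
  simp only [omegaF, H.sesq.1, H.sesq.2.1]; ring

theorem q_smul_mem (H : IsFormed σ ε Λ q) (a : F) {v : E} (h : q v v ∈ Λ) :
    q (a • v) (a • v) ∈ Λ := by
  rw [H.sesq.2.2]; exact H.scale _ h a

theorem self_zero (H : IsFormed σ ε Λ q) {v : E} (h : q v v ∈ Λ) : omegaF σ ε q v v = 0 :=
  H.lmax _ h

end IsFormed

namespace IsIsoK

theorem refl (H : IsFormed σ ε Λ q) : IsIsoK σ ε Λ q (LinearEquiv.refl F E) :=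
  ⟨fun _ _ => rfl, fun v => by simp, fun _ _ => rfl⟩

theorem trans {g h : E ≃ₗ[F] E} (hg : IsIsoK σ ε Λ q g) (hh : IsIsoK σ ε Λ q h) :
    IsIsoK σ ε Λ q (g.trans h) where
  om v v' := by simp [hh.om, hg.om]
  form v := by
    have := Λ.add_mem (hh.form (g v)) (hg.form v)
    simpa using this
  ker k hk := by simp [hg.ker k hk, hh.ker k hk]

end IsIsoK

/-- If `W ⊥ W` and `W + U^⊥ = E`, then a sum `w + u` in `K(E)` has both terms in
`K(E)`: `u` is perpendicular to `W` and to `U^⊥`. -/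
theorem ker_of_add (H : IsFormed σ ε Λ q) (U W : Submodule F E)
    (hW : ∀ w ∈ W, ∀ w' ∈ W, omegaF σ ε q w w' = 0)
    (hsum : ∀ v : E, ∃ w ∈ W, ∃ p ∈ perpSet σ ε q (U : Set E), v = w + p)
    (w u : E) (hw : w ∈ W) (hu : u ∈ U) (hk : ∀ v, omegaF σ ε q v (w + u) = 0) :
    (∀ v, omegaF σ ε q v u = 0) ∧ ∀ v, omegaF σ ε q v w = 0 := by
  have hu' : ∀ v, omegaF σ ε q v u = 0 := fun v => by
    obtain ⟨w', hw', p, hp, rfl⟩ := hsum v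
    have h := hk w'
    rw [H.add_right, hW w' hw' w hw, zero_add] at h
    rw [H.add_left, h, hp u hu, add_zero]
  refine ⟨hu', fun v => ?_⟩
  have h := hk v
  rwa [H.add_right, hu', add_zero] at h

/-! ### The double perpendicular -/

/-- The linear functional `ω_q(z, ·)`. -/
def omFun (H : IsFormed σ ε Λ q) (z : E) : E →ₗ[F] F where
  toFun v := omegaF σ ε q z v
  map_add' := H.add_right z
  map_smul' a v := by simp [H.smul_right, mul_comm]

/-- The semilinear map `E → E*`, `z ↦ ω_q(z, ·)`. -/
def omMap (H : IsFormed σ ε Λ q) : E →ₛₗ[σ] Module.Dual F E where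
  toFun z := omFun H z
  map_add' z z' := by ext v; simp [omFun, H.add_left]
  map_smul' a z := by ext v; simp [omFun, H.smul_left]

variable [FiniteDimensional F E]

/-- The double perpendicular of `S` is `S + K(E)`: the functionals `ω_q(w, ·)` are exactly
those vanishing on `K(E)`. -/
theorem exists_sub_ker (H : IsFormed σ ε Λ q) (S : Submodule F E) (x : E)
    (h : ∀ w, (∀ s ∈ S, omegaF σ ε q w s = 0) → omegaF σ ε q w x = 0) :
    ∃ s ∈ S, ∀ w, omegaF σ ε q w (x - s) = 0 := by
  have : RingHomSurjective σ := ⟨fun a => ⟨σ a, H.invol a⟩⟩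
  set R : Submodule F (Module.Dual F E) := LinearMap.range (omMap H) with hR
  have hx : x ∈ S ⊔ R.dualCoannihilator := by
    rw [← Subspace.dualAnnihilator_dualCoannihilator_eq (W := S ⊔ R.dualCoannihilator),
      Submodule.mem_dualCoannihilator]
    intro φ hφ
    rw [Submodule.dualAnnihilator_sup_eq, Subspace.dualCoannihilator_dualAnnihilator_eq] at hφ
    obtain ⟨hφS, w, rfl⟩ := hφ
    exact h w fun s hs => (Submodule.mem_dualAnnihilator _).1 hφS s hs
  obtain ⟨s, hs, k, hk, rfl⟩ := Submodule.mem_sup.1 hx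
  refine ⟨s, hs, fun w => ?_⟩
  rw [add_sub_cancel_left]
  exact (Submodule.mem_dualCoannihilator _).1 hk (omMap H w) ⟨w, rfl⟩

/-! ### Explicit isometries -/

/-- Criterion for `1 + n` to be a bijective isometry fixing `K(E)`. Bijectivity is automatic:
a vector killed by an isometry lies in `K(E)`, where `1 + n` is the identity. -/
theorem exists_isoK_of_add (H : IsFormed σ ε Λ q) (n : E →ₗ[F] E)
    (hω : ∀ v v', omegaF σ ε q v (n v') + omegaF σ ε q (n v) v' + omegaF σ ε q (n v) (n v') = 0)
    (hq : ∀ v, q (n v) (n v) + omegaF σ ε q v (n v) ∈ Λ)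
    (hk : ∀ k, (∀ w, omegaF σ ε q w k = 0) → n k = 0) :
    ∃ g : E ≃ₗ[F] E, IsIsoK σ ε Λ q g ∧ ∀ v, g v = v + n v := by
  have hom : ∀ v v', omegaF σ ε q (v + n v) (v' + n v') = omegaF σ ε q v v' := fun v v' => by
    rw [H.add_left, H.add_right, H.add_right]
    linear_combination hω v v'
  have hinj : Function.Injective (LinearMap.id + n : E →ₗ[F] E) := by
    rw [← LinearMap.ker_eq_bot, LinearMap.ker_eq_bot']
    intro v hv
    have hv' : v + n v = 0 := hv
    have hK : ∀ w, omegaF σ ε q w v = 0 := fun w => by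
      rw [← hom, hv']
      have := H.smul_right 0 (w + n w) 0
      simpa using this
    rwa [hk v hK, add_zero] at hv'
  refine ⟨LinearEquiv.ofInjectiveEndo _ hinj, ⟨fun v v' => ?_, fun v => ?_, fun k hK => ?_⟩,
    fun v => by simp⟩
  · simpa using hom v v'
  · have := Λ.add_mem (H.q_add v (n v)) (hq v)
    simp only [LinearEquiv.coe_ofInjectiveEndo, LinearMap.add_apply, LinearMap.id_apply]
    convert this using 1; ring
  · simp [hk k hK]

/-- If `z = y - x` is not perpendicular to `x`, the quasi-reflection
`v ↦ v + ω(z,x)⁻¹ ω(z,v) z` carries `x` to `y`, and it fixes everything perpendicular to `z`. -/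
theorem exists_reflection (H : IsFormed σ ε Λ q) (V : Submodule F E) (x y : E)
    (hV : ∀ v ∈ V, omegaF σ ε q (y - x) v = 0) (hq : q y y - q x x ∈ Λ)
    (hne : omegaF σ ε q (y - x) x ≠ 0) :
    ∃ g : E ≃ₗ[F] E, IsIsoK σ ε Λ q g ∧ (∀ v ∈ V, g v = v) ∧ g x = y := by
  obtain ⟨z, rfl⟩ : ∃ z, y = x + z := ⟨y - x, by abel⟩
  simp only [add_sub_cancel_left] at hV hne
  set c : F := (omegaF σ ε q z x)⁻¹ with hc
  have hc0 : c ≠ 0 := inv_ne_zero hne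
  have hσc0 : σ c ≠ 0 := by simpa using hc0
  have hzx : omegaF σ ε q z x = c⁻¹ := by simp [hc]
  -- `q(x + z) ≡ q(x)` says precisely that `q(z,z) + ω(x,z) ∈ Λ`.
  have hm : q z z + ε * (σ c)⁻¹ ∈ Λ := by
    have h1 : omegaF σ ε q x z = ε * (σ c)⁻¹ := by rw [H.symm, hzx, map_inv₀]
    have := Λ.sub_mem hq (H.q_add x z)
    rw [h1] at this
    convert this using 1; ring
  have hmz : ε * c + σ c + σ c * c * omegaF σ ε q z z = 0 := by
    have h := H.lmax _ hm
    simp only [map_add, map_mul, map_inv₀, H.invol] at h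
    have h2 : omegaF σ ε q z z + ε * (σ c)⁻¹ + c⁻¹ = 0 := by
      rw [omegaF]; linear_combination h - c⁻¹ * H.unit
    have h3 : σ c * c * (omegaF σ ε q z z + ε * (σ c)⁻¹ + c⁻¹) = 0 := by rw [h2, mul_zero]
    field_simp at h3
    linear_combination h3
  have hvz : ∀ v, omegaF σ ε q v z = ε * σ (omegaF σ ε q z v) := fun v => H.symm v z
  obtain ⟨g, hg, hgv⟩ := exists_isoK_of_add H ((c • omFun H z).smulRight z)
    (fun v v' => by
      simp only [LinearMap.smulRight_apply, LinearMap.smul_apply, omFun, LinearMap.coe_mk,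
        AddHom.coe_mk, smul_eq_mul, H.smul_left, H.smul_right, map_mul, hvz v]
      linear_combination (σ (omegaF σ ε q z v) * omegaF σ ε q z v') * hmz)
    (fun v => by
      simp only [LinearMap.smulRight_apply, LinearMap.smul_apply, omFun, LinearMap.coe_mk,
        AddHom.coe_mk, smul_eq_mul, H.smul_right, H.sesq.2.2, map_mul, hvz v]
      have := H.scale _ hm (c * omegaF σ ε q z v)
      convert this using 1
      rw [map_mul]
      field_simp)
    (fun k hk => by simp [omFun, hk z])
  refine ⟨g, hg, fun v hv => ?_, ?_⟩
  · simp [hgv, omFun, hV v hv]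
  · simp [hgv, omFun, hc, inv_mul_cancel₀ hne]

/-- The Siegel (Eichler) transformation along a singular vector `z` and a vector `w ⊥ z` with
`ω(w,x) = 1`: it carries `x` to `x + z` when `x ⊥ z`, and fixes `{z, w}^⊥`. -/
theorem exists_siegel (H : IsFormed σ ε Λ q) (V : Submodule F E) (x z w : E)
    (hz : q z z ∈ Λ) (hzx : omegaF σ ε q z x = 0) (hV : ∀ v ∈ V, omegaF σ ε q z v = 0)
    (hwV : ∀ v ∈ V, omegaF σ ε q w v = 0) (hwz : omegaF σ ε q w z = 0)
    (hwx : omegaF σ ε q w x = 1) :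
    ∃ g : E ≃ₗ[F] E, IsIsoK σ ε Λ q g ∧ (∀ v ∈ V, g v = v) ∧ g x = x + z := by
  have hzw := H.symm_zero hwz
  have hzz := H.self_zero hz
  have hvz : ∀ v, omegaF σ ε q v z = ε * σ (omegaF σ ε q z v) := fun v => H.symm v z
  have hvw : ∀ v, omegaF σ ε q v w = ε * σ (omegaF σ ε q w v) := fun v => H.symm v w
  obtain ⟨g, hg, hgv⟩ := exists_isoK_of_add H
    ((omFun H w - (σ ε * q w w) • omFun H z).smulRight z - (σ ε • omFun H z).smulRight w)
    (fun v v' => by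
      simp only [LinearMap.smulRight_apply, LinearMap.smul_apply, LinearMap.sub_apply, omFun,
        LinearMap.coe_mk, AddHom.coe_mk, smul_eq_mul, H.smul_left, H.smul_right, H.sub_left,
        H.sub_right, map_mul, map_sub, H.invol, hwz, hzw, hzz, hvz v, hvw v]
      have hww : omegaF σ ε q w w = q w w + ε * σ (q w w) := rfl
      rw [hww]
      generalize omegaF σ ε q z v = t
      generalize omegaF σ ε q z v' = t'
      generalize omegaF σ ε q w v = s
      generalize omegaF σ ε q w v' = s'
      linear_combination (σ t * t' * ε * σ (q w w) - σ s * t') * H.unit)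
    (fun v => by
      simp only [LinearMap.smulRight_apply, LinearMap.smul_apply, LinearMap.sub_apply, omFun,
        LinearMap.coe_mk, AddHom.coe_mk, smul_eq_mul, H.smul_right, H.sub_right, hvz v, hvw v]
      set t := omegaF σ ε q z v with ht
      set s := omegaF σ ε q w v with hs
      set b := s - σ ε * q w w * t with hb
      have h1 := H.q_add (b • z) ((-(σ ε * t)) • w)
      rw [H.smul_left, H.smul_right, hzw, neg_smul, ← sub_eq_add_neg] at h1
      have h2 := H.q_smul_mem b hz
      have h3 : q (-((σ ε * t) • w)) (-((σ ε * t) • w)) = σ t * t * q w w := by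
        rw [← neg_smul, H.sesq.2.2]
        simp only [map_neg, map_mul, H.invol]
        linear_combination (σ t * t * q w w) * H.unit
      rw [h3] at h1
      have h4 := H.lmin (ε * σ t * s)
      simp only [map_mul, H.invol] at h4
      have := Λ.add_mem (Λ.add_mem h1 h2) h4
      convert this using 1
      rw [hb]
      linear_combination (- σ t * t * q w w) * H.unit)
    (fun k hk => by simp [omFun, hk z, hk w])
  refine ⟨g, hg, fun v hv => ?_, ?_⟩
  · simp [hgv, omFun, hV v hv, hwV v hv]
  · simp [hgv, omFun, hzx, hwx]

/-! ### The Witt extension step -/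

/-- One-vector extension step of Witt's theorem: the map that is the identity on `V` and sends
`x` to `y` is realized by an isometry, provided it is isometric and moves nothing into or out
of `K(E)`. -/
theorem exists_step (H : IsFormed σ ε Λ q) (V : Submodule F E) (x y : E)
    (hV : ∀ v ∈ V, omegaF σ ε q (y - x) v = 0) (hq : q y y - q x x ∈ Λ)
    (hx : ∀ v ∈ V, (∀ w, omegaF σ ε q w (x - v) = 0) → y = x)
    (hy : ∀ v ∈ V, (∀ w, omegaF σ ε q w (y - v) = 0) → y = x) :
    ∃ g : E ≃ₗ[F] E, IsIsoK σ ε Λ q g ∧ (∀ v ∈ V, g v = v) ∧ g x = y := by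
  by_cases hne : omegaF σ ε q (y - x) x ≠ 0
  · exact exists_reflection H V x y hV hq hne
  push Not at hne
  by_cases hyx : y = x
  · exact ⟨_, IsIsoK.refl H, fun _ _ => rfl, hyx.symm⟩
  obtain ⟨z, rfl⟩ : ∃ z, y = x + z := ⟨y - x, by abel⟩
  simp only [add_sub_cancel_left] at hV hne
  have hxz := H.symm_zero hne
  have hz : q z z ∈ Λ := by
    have := Λ.sub_mem hq (H.q_add x z)
    rw [hxz] at this
    convert this using 1; ring
  have hzz := H.self_zero hz
  by_cases hw : ∃ w, (∀ s ∈ V ⊔ Submodule.span F {z}, omegaF σ ε q w s = 0) ∧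
      omegaF σ ε q w x ≠ 0
  · obtain ⟨w, hw, hwx⟩ := hw
    refine exists_siegel H V x z (σ (omegaF σ ε q w x)⁻¹ • w) hz hne hV (fun v hv => ?_) ?_ ?_
    · rw [H.smul_left, hw v (Submodule.mem_sup_left hv), mul_zero]
    · rw [H.smul_left, hw z (Submodule.mem_sup_right (Submodule.mem_span_singleton_self z)),
        mul_zero]
    · rw [H.smul_left, H.invol, inv_mul_cancel₀ hwx]
  -- Here `x ∈ V + ⟨z⟩ + K(E)`, and `x` is carried to `y` by two quasi-reflections through a
  -- vector lying outside `z^⊥`.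
  push Not at hw
  obtain ⟨s, hs, hk⟩ := exists_sub_ker H _ x hw
  obtain ⟨v, hv, az, haz, rfl⟩ := Submodule.mem_sup.1 hs
  obtain ⟨a, rfl⟩ := Submodule.mem_span_singleton.1 haz
  obtain ⟨k, rfl⟩ : ∃ k, x = v + a • z + k := ⟨x - (v + a • z), by abel⟩
  simp only [add_sub_cancel_left] at hk
  have ha : a ≠ 0 := by
    rintro rfl
    exact hyx (hx v hv (by simpa using hk))
  have ha1 : a + 1 ≠ 0 := by
    intro h
    refine hyx (hy v hv ?_)
    have h0 : a • z + z = 0 := by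
      have : (a + 1) • z = 0 := by rw [h, zero_smul]
      rwa [add_smul, one_smul] at this
    have : v + a • z + k + z - v = k := by
      rw [show v + a • z + k + z - v = (a • z + z) + k by abel, h0, zero_add]
    rwa [this]
  obtain ⟨w, hwV, hwz⟩ : ∃ w, (∀ s ∈ V, omegaF σ ε q w s = 0) ∧ omegaF σ ε q w z ≠ 0 := by
    by_contra! hcon
    obtain ⟨v', hv', hk'⟩ := exists_sub_ker H V z hcon
    refine hyx (hx (v + a • v') (V.add_mem hv (V.smul_mem a hv')) fun w => ?_)
    have : v + a • z + k - (v + a • v') = a • (z - v') + k := by rw [smul_sub]; abel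
    rw [this, H.add_right, H.smul_right, hk', hk]; simp
  -- Correct `w` by a multiple of `z` to make it singular.
  obtain ⟨p, hpV, hpz, hp⟩ : ∃ p, (∀ s ∈ V, omegaF σ ε q p s = 0) ∧
      omegaF σ ε q p z ≠ 0 ∧ q p p ∈ Λ := by
    refine ⟨w + (-(q w w / omegaF σ ε q w z)) • z, fun s hs => ?_, ?_, ?_⟩
    · rw [H.add_left, H.smul_left, hwV s hs, hV s hs]; simp
    · rw [H.add_left, H.smul_left, hzz]; simpa using hwz
    · have h1 := H.q_add w ((-(q w w / omegaF σ ε q w z)) • z)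
      have h2 := H.q_smul_mem (-(q w w / omegaF σ ε q w z)) hz
      have := Λ.add_mem h1 h2
      rw [H.smul_right] at this
      convert this using 1
      field_simp
      ring
  have hpp := H.self_zero hp
  have hzp : omegaF σ ε q z p ≠ 0 := fun h => hpz (H.symm_zero h)
  have hkl : ∀ w, omegaF σ ε q k w = 0 := fun w => H.symm_zero (hk w)
  have hvz := H.symm_zero (hV v hv)
  have hvp := H.symm_zero (hpV v hv)
  have hqx : ∀ b : F, ∀ r, omegaF σ ε q v r = 0 → q r r ∈ Λ →
      q (v + b • r + k) (v + b • r + k) - q (v + k) (v + k) ∈ Λ := by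
    intro b r hr hqr
    have h1 := H.q_add (v + k) (b • r)
    rw [H.add_left, hkl, H.smul_right, hr] at h1
    have := Λ.add_mem h1 (H.q_smul_mem b hqr)
    have e : v + b • r + k = v + k + b • r := by abel
    rw [e]
    convert this using 1; ring
  have hqp := hqx 1 p hvp hp
  rw [one_smul] at hqp
  have hqa := hqx a z hvz hz
  have e1 : v + p + k - (v + a • z + k) = p - a • z := by abel
  have e2 : v + a • z + k + z - (v + p + k) = (a + 1) • z - p := by
    rw [add_smul, one_smul]; abel
  obtain ⟨g₁, hg₁, hg₁V, hg₁x⟩ := exists_reflection H V (v + a • z + k) (v + p + k)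
    (fun s hs => by rw [e1, H.sub_left, H.smul_left, hV s hs, hpV s hs]; simp)
    (by convert Λ.sub_mem hqp hqa using 1; ring)
    (by
      rw [e1, H.sub_left, H.smul_left, hne, H.add_right, H.add_right, hpV v hv, hk, H.smul_right]
      simpa using ⟨hpz, ha⟩)
  obtain ⟨g₂, hg₂, hg₂V, hg₂x⟩ := exists_reflection H V (v + p + k) (v + a • z + k + z)
    (fun s hs => by rw [e2, H.sub_left, H.smul_left, hV s hs, hpV s hs]; simp)
    (by convert Λ.add_mem hq (Λ.sub_mem hqa hqp) using 1; ring)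
    (by
      rw [e2, H.sub_left, H.smul_left]
      simp only [H.add_right, hpV v hv, hk, hV v hv, hpp]
      have : σ (a + 1) ≠ 0 := by simpa only [ne_eq, map_eq_zero] using ha1
      simpa only [zero_add, add_zero, sub_zero] using mul_ne_zero this hzp)
  exact ⟨g₁.trans g₂, hg₁.trans hg₂, fun s hs => by simp [hg₁V s hs, hg₂V s hs],
    by simp [hg₁x, hg₂x]⟩

end Formed

/-- Let `(E,q)` be a formed space, `U, W₁, W₂` isotropic subspaces containing `R(E)` with
`dim W₁ = dim W₂` and `W₁ + U^⊥ = W₂ + U^⊥ = E`. An isomorphism `f : W₁ → W₂` restricting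
to the identity on `R(E)` extends to a bijective isometry of `E` fixing `U` pointwise if
and only if `f(w) − w ∈ U^⊥` for all `w ∈ W₁`. -/
theorem stmt18 {F E : Type*} [Field F] [AddCommGroup E] [Module F E]
    [FiniteDimensional F E]
    (σ : F →+* F) (hσ : ∀ a : F, σ (σ a) = a)
    (ε : F) (hε : ε * σ ε = 1)
    (Λ : AddSubgroup F)
    (hmin : ∀ a : F, a - ε * σ a ∈ Λ)
    (hmax : ∀ a ∈ Λ, a + ε * σ a = 0)
    (q : E → E → F) (hq : IsSesq σ q)
    (U W₁ W₂ : Submodule F E)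
    (hU : IsIsotropic σ ε q (Λ : Set F) U)
    (hW₁ : IsIsotropic σ ε q (Λ : Set F) W₁)
    (hW₂ : IsIsotropic σ ε q (Λ : Set F) W₂)
    (hRU : radSet σ ε q (Λ : Set F) ⊆ (U : Set E))
    (hRW₁ : radSet σ ε q (Λ : Set F) ⊆ (W₁ : Set E))
    (hRW₂ : radSet σ ε q (Λ : Set F) ⊆ (W₂ : Set E))
    (hdim : Module.finrank F W₁ = Module.finrank F W₂)
    (hsum₁ : ∀ v : E, ∃ w ∈ W₁, ∃ p ∈ perpSet σ ε q (U : Set E), v = w + p)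
    (hsum₂ : ∀ v : E, ∃ w ∈ W₂, ∃ p ∈ perpSet σ ε q (U : Set E), v = w + p)
    (f : W₁ →ₗ[F] W₂) (hfbij : Function.Bijective f)
    (hfR : ∀ w : W₁, (w : E) ∈ radSet σ ε q (Λ : Set F) → (f w : E) = (w : E)) :
    (∃ g : E ≃ₗ[F] E,
      (∀ v v' : E, omegaF σ ε q (g v) (g v') = omegaF σ ε q v v') ∧
      (∀ v : E, q (g v) (g v) - q v v ∈ Λ) ∧
      (∀ w : W₁, g (w : E) = (f w : E)) ∧
      ∀ u ∈ U, g u = u) ↔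
    ∀ w : W₁, (f w : E) - (w : E) ∈ perpSet σ ε q (U : Set E) := by
  constructor
  · rintro ⟨g, hgω, -, hgW, hgU⟩ w u hu
    have h := hgω w u
    rw [hgW, hgU u hu] at h
    simp only [omegaF, hq.1, hq.2.1, sub_eq_add_neg] at h ⊢
    have hn1 : q (-(w : E)) u = - q w u := by
      have := hq.2.2 (-1) 1 w u; simpa using this
    have hn2 : q u (-(w : E)) = - q u w := by
      have := hq.2.2 1 (-1) u w; simpa using this
    rw [hn1, hn2, map_add, map_neg]
    linear_combination h
  intro hf
  -- A linear isometry and an isotropic subspace only see the scaling-closed core of `Λ`.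
  have hcore : ∀ a ∈ scaleCore σ Λ, a ∈ Λ := fun a ha => by simpa using ha 1
  have H : IsFormed σ ε (scaleCore σ Λ) q :=
    { invol := hσ
      unit := hε
      lmin := fun a c => by
        have := hmin (σ c * a * c)
        convert this using 1
        simp only [map_mul, hσ]; ring
      lmax := fun a ha => hmax a (hcore a ha)
      scale := fun a ha c d => by
        have := ha (c * d)
        convert this using 1
        rw [map_mul]; ring
      sesq := hq }
  have iso : ∀ W : Submodule F E, IsIsotropic σ ε q (Λ : Set F) W →
      ∀ w ∈ W, q w w ∈ scaleCore σ Λ := fun W hW w hw c => by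
    rw [← hq.2.2]; exact hW.2 _ (W.smul_mem c hw)
  have key : ∀ s : Finset W₁, ∃ g : E ≃ₗ[F] E, IsIsoK σ ε (scaleCore σ Λ) q g ∧
      (∀ u ∈ U, g u = u) ∧ ∀ w ∈ Submodule.span F (s : Set W₁), g (w : E) = (f w : E) := by
    classical
    intro s
    induction s using Finset.induction with
    | empty =>
      refine ⟨_, IsIsoK.refl H, fun _ _ => rfl, fun w hw => ?_⟩
      have : w = 0 := by simpa using hw
      simp [this]
    | insert x s _ ih =>
      obtain ⟨g, hg, hgU, hgs⟩ := ih
      set y : E := g.symm (f x) with hy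
      have hgy : g y = f x := by simp [hy]
      obtain ⟨h, hh, hhV, hhx⟩ := exists_step H
        (U ⊔ (Submodule.span F (s : Set W₁)).map W₁.subtype) (x : E) y
        (fun v hv => by
          obtain ⟨u, hu, _, ⟨w, hw, rfl⟩, rfl⟩ := Submodule.mem_sup.1 hv
          simp only [Submodule.subtype_apply]
          rw [H.add_right, H.sub_left, H.sub_left, ← hg.om y, ← hg.om y, hgy, hgU u hu,
            hgs w hw, hW₂.1 _ (f x).2 _ (f w).2, hW₁.1 _ x.2 _ w.2, ← H.sub_left, hf x u hu]
          simp)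
        (by
          have h1 := hg.form y
          rw [hgy] at h1
          have := (scaleCore σ Λ).sub_mem ((scaleCore σ Λ).sub_mem (iso W₂ hW₂ _ (f x).2) h1)
            (iso W₁ hW₁ _ x.2)
          convert this using 1; ring)
        (fun v hv hk => by
          obtain ⟨u, hu, _, ⟨w, hw, rfl⟩, rfl⟩ := Submodule.mem_sup.1 hv
          have e : (x : E) - (u + (w : E)) = ((x - w : W₁) : E) + -u := by push_cast; abel
          simp only [Submodule.subtype_apply] at hk
          rw [e] at hk
          have hK := (ker_of_add H U W₁ hW₁.1 hsum₁ _ _ (x - w).2 (U.neg_mem hu) hk).2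
          have hfix := hfR (x - w) ⟨hK, hW₁.2 _ (x - w).2⟩
          apply g.injective
          have hgk := hg.ker _ hK
          rw [hgy]
          have e2 : (x : E) = w + ((x - w : W₁) : E) := by push_cast; abel
          rw [e2, map_add, hgk, hgs w hw, ← hfix, map_sub]
          push_cast; abel)
        (fun v hv hk => by
          obtain ⟨u, hu, _, ⟨w, hw, rfl⟩, rfl⟩ := Submodule.mem_sup.1 hv
          simp only [Submodule.subtype_apply] at hk
          have hgk := hg.ker _ hk
          have e : g (y - (u + (w : E))) = (f (x - w) : E) + -u := by
            rw [map_sub, map_add, hgy, hgU u hu, hgs w hw, map_sub]; push_cast; abel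
          rw [e] at hgk
          rw [← hgk] at hk
          have hK := (ker_of_add H U W₂ hW₂.1 hsum₂ _ _ (f (x - w)).2 (U.neg_mem hu) hk).2
          have hR : (f (x - w) : E) ∈ radSet σ ε q (Λ : Set F) := ⟨hK, hW₂.2 _ (f (x - w)).2⟩
          -- `f` also fixes `r = f (x - w) ∈ R(E)`, so `x - w = r` by injectivity.
          have hr := hfR ⟨f (x - w), hRW₁ hR⟩ hR
          have hr' := hfbij.1 (Subtype.ext hr)
          have hr2 : (f (x - w) : E) = x - w := by
            have := congrArg (Subtype.val) hr'
            simpa using this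
          rw [hr2] at hgk
          have : y = (x - w + -u) + (u + w) := by rw [hgk]; abel
          rw [this]; abel)
      refine ⟨h.trans g, hh.trans hg, fun u hu => ?_, fun w hw => ?_⟩
      · simp [hhV u (Submodule.mem_sup_left hu), hgU u hu]
      · rw [Finset.coe_insert] at hw
        obtain ⟨a, w', hw', rfl⟩ := Submodule.mem_span_insert.1 hw
        have h1 := hhV (w' : E) (Submodule.mem_sup_right ⟨w', hw', rfl⟩)
        simp [hhx, h1, hgy, hgs w' hw']
  obtain ⟨s, hs⟩ := (Module.finite_def.1 (inferInstance : Module.Finite F W₁))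
  obtain ⟨g, hg, hgU, hgs⟩ := key s
  exact ⟨g, hg.om, fun v => hcore _ (hg.form v), fun w => hgs w (by simp [hs]), hgU⟩
end
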